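/- Let G be the free group on generators a_1,…,a_n, let H be a free group, and let φ : G → H be a homomorphism with remnant; set l = min_i |Rem_φ a_i| ≥ 1. Then for every w ∈ H: w lies in the image subgroup φ(G) if and only if there exists z ∈ G with |z| ≤ |w|/l and w = φ(z). In particular, membership in φ(G) is decided by checking the finitely many z of length at most |w|/l. -/

import Mathlib

/-- Half the total cancellation in the product `x * y` of elements of a free group:
`(|x| + |y| - |x*y|) / 2`. -/
def cancelLen {β : Type} [DecidableEq β] (x y : FreeGroup β) : ℕ :=
  (FreeGroup.norm x + FreeGroup.norm y - FreeGroup.norm (x * y)) / 2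

/-- `x` or `x⁻¹`, according to the sign `b` (`true` = exponent `1`, `false` = exponent `-1`). -/
def pmPow {β : Type} [DecidableEq β] (b : Bool) (x : FreeGroup β) : FreeGroup β :=
  if b then x else x⁻¹

/-- The left cancellation `L_i` of the `i`-th entry of the tuple `t`: the maximum of
`(|h_j^α| + |h_i| - |h_j^α * h_i|)/2` over pairs `(j, α)` with `(j, α) ≠ (i, -1)`. -/
def leftCancel {β : Type} [DecidableEq β] {N : ℕ} (t : Fin N → FreeGroup β) (i : Fin N) : ℕ :=
  Finset.univ.sup fun p : Fin N × Bool =>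
    if p.1 = i ∧ p.2 = false then 0 else cancelLen (pmPow p.2 (t p.1)) (t i)

/-- The right cancellation `R_i` of the `i`-th entry of the tuple `t`: the maximum of
`(|h_i| + |h_k^β| - |h_i * h_k^β|)/2` over pairs `(k, β)` with `(k, β) ≠ (i, -1)`. -/
def rightCancel {β : Type} [DecidableEq β] {N : ℕ} (t : Fin N → FreeGroup β) (i : Fin N) : ℕ :=
  Finset.univ.sup fun p : Fin N × Bool =>
    if p.1 = i ∧ p.2 = false then 0 else cancelLen (t i) (pmPow p.2 (t p.1))

/-- The remnant length `|Rem_t h_i| = |h_i| - L_i - R_i` of the `i`-th entry of `t`. -/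
def remLen {β : Type} [DecidableEq β] {N : ℕ} (t : Fin N → FreeGroup β) (i : Fin N) : ℕ :=
  FreeGroup.norm (t i) - leftCancel t i - rightCancel t i

/-- A tuple has remnant if `|h_i| - L_i - R_i ≥ 1` for all `i`. -/
def HasRemnant {β : Type} [DecidableEq β] {N : ℕ} (t : Fin N → FreeGroup β) : Prop :=
  ∀ i, 1 ≤ remLen t i

/-! If the cancellations on the two sides of a factor `y` do not meet, then multiplying `y` on the
right does not change what cancels on its left. In a tuple with remnant this holds at every letter
of a product spelled by a reduced word `z`, so only neighbouring letters cancel. Charging each of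
these cancellations once to its left and once to its right letter leaves at least
`|h_i| - L_i - R_i ≥ l` of every letter, whence `l * |z| ≤ |φ z|`. -/

open FreeGroup

section Words

variable {α : Type*}

theorem exists_isReduced_append_of_isReduced {u v : List (α × Bool)} (hu : IsReduced u)
    (hv : IsReduced v) : ∃ p q s, u = p ++ q ∧ v = invRev q ++ s ∧ IsReduced (p ++ s) := by
  induction u using List.reverseRecOn generalizing v with
  | nil => exact ⟨[], [], v, rfl, rfl, hv⟩
  | append_singleton u a ih =>
    rcases v with _ | ⟨b, v⟩
    · exact ⟨u ++ [a], [], [], by simp, rfl, by simpa using hu⟩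
    by_cases hab : b = (a.1, !a.2)
    · obtain ⟨p, q, s, rfl, rfl, hps⟩ :=
        ih (hu.infix (List.prefix_append _ _).isInfix) (hv.infix (List.suffix_cons _ _).isInfix)
      exact ⟨p, q ++ [a], s, by simp, by simp [invRev, hab], hps⟩
    · have hcons : IsReduced ([a] ++ b :: v) := by
        refine isReduced_cons_cons.2 ⟨fun h₁ => ?_, hv⟩
        by_contra h₂
        exact hab (Prod.ext h₁.symm (Bool.eq_not.2 (Ne.symm h₂)))
      exact ⟨u ++ [a], [], b :: v, by simp, rfl, hu.append_overlap hcons (List.cons_ne_nil _ _)⟩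

theorem toWord_mul_of_isReduced_append [DecidableEq α] {x y : FreeGroup α}
    {p q s : List (α × Bool)} (hx : x.toWord = p ++ q) (hy : y.toWord = invRev q ++ s)
    (hps : IsReduced (p ++ s)) : (x * y).toWord = p ++ s := by
  have hxy : x * y = mk (p ++ s) := by
    rw [← mk_toWord (x := x), ← mk_toWord (x := y), hx, hy]
    simp only [← mul_mk, ← inv_mk]
    group
  rw [hxy, toWord_mk, hps.reduce_eq]

end Words

section Cancellation

variable {β : Type} [DecidableEq β]

theorem cancelLen_eq_length {x y : FreeGroup β} {p q s : List (β × Bool)}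
    (hx : x.toWord = p ++ q) (hy : y.toWord = invRev q ++ s) (hps : IsReduced (p ++ s)) :
    cancelLen x y = q.length := by
  simp only [cancelLen, FreeGroup.norm, toWord_mul_of_isReduced_append hx hy hps, hx, hy,
    List.length_append, invRev_length]
  omega

theorem exists_toWord_eq_append (x y : FreeGroup β) :
    ∃ p q s, x.toWord = p ++ q ∧ y.toWord = invRev q ++ s ∧ IsReduced (p ++ s) ∧
      cancelLen x y = q.length := by
  obtain ⟨p, q, s, hx, hy, hps⟩ :=
    exists_isReduced_append_of_isReduced (isReduced_toWord (x := x)) (isReduced_toWord (x := y))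
  exact ⟨p, q, s, hx, hy, hps, cancelLen_eq_length hx hy hps⟩

theorem norm_mul_add_two_mul_cancelLen (x y : FreeGroup β) :
    (x * y).norm + 2 * cancelLen x y = x.norm + y.norm := by
  obtain ⟨p, q, s, hx, hy, hps, hc⟩ := exists_toWord_eq_append x y
  simp only [hc, FreeGroup.norm, toWord_mul_of_isReduced_append hx hy hps, hx, hy,
    List.length_append, invRev_length]
  omega

theorem cancelLen_inv_inv (x y : FreeGroup β) : cancelLen x⁻¹ y⁻¹ = cancelLen y x := by
  simp only [cancelLen, ← mul_inv_rev, norm_inv_eq, add_comm]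

theorem cancelLen_mul_right_of_lt {x y z : FreeGroup β}
    (h : cancelLen x y + cancelLen y z < y.norm) : cancelLen x (y * z) = cancelLen x y := by
  obtain ⟨p, q, s, hx, hy, hps, hc⟩ := exists_toWord_eq_append x y
  obtain ⟨p', q', s', hy', hz, hps', hc'⟩ := exists_toWord_eq_append y z
  have hlen : q.length < p'.length := by
    rw [hc, hc', FreeGroup.norm, hy', List.length_append] at h
    omega
  -- `m` is the part of `y` that survives both cancellations.
  obtain ⟨m, rfl⟩ : invRev q <+: p' :=
    List.prefix_of_prefix_length_le (hy ▸ List.prefix_append _ _) (hy' ▸ List.prefix_append _ _)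
      (by simpa using hlen.le)
  have hm : m ≠ [] := by
    rintro rfl
    simp at hlen
  obtain rfl : s = m ++ q' := by simpa [hy] using hy'
  have hpm : IsReduced (p ++ m) := hps.infix ⟨[], q', by simp⟩
  have hms' : IsReduced (m ++ s') := hps'.infix ⟨invRev q, [], by simp⟩
  have hyz : (y * z).toWord = invRev q ++ (m ++ s') := by
    rw [toWord_mul_of_isReduced_append hy' hz hps', List.append_assoc]
  rw [hc, cancelLen_eq_length hx hyz (by simpa using hpm.append_overlap hms' hm)]

section Chain

variable {ι : Type*} {r : ι → ι → Prop} {g : ι → FreeGroup β} {L R : ι → ℕ}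

theorem cancelLen_mul_prod_of_isChain (hL : ∀ i j, r i j → cancelLen (g i) (g j) ≤ L j)
    (hR : ∀ i j, r i j → cancelLen (g i) (g j) ≤ R i) (hLR : ∀ i, L i + R i < (g i).norm)
    {i : ι} {I : List ι} (hI : (i :: I).IsChain r) {x : FreeGroup β}
    (hx : cancelLen x (g i) ≤ L i) :
    cancelLen x (g i * (I.map g).prod) = cancelLen x (g i) := by
  induction I generalizing i x with
  | nil => simp
  | cons j I ih =>
    obtain ⟨hij, hjI⟩ := List.isChain_cons_cons.1 hI
    have hnext : cancelLen (g i) ((j :: I).map g).prod ≤ R i := by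
      rw [List.map_cons, List.prod_cons, ih hjI (hL i j hij)]
      exact hR i j hij
    exact cancelLen_mul_right_of_lt ((Nat.add_le_add hx hnext).trans_lt (hLR i))

-- The summand `L i` is what a factor to the left of `g i` may still cancel.
theorem mul_length_add_le_norm_prod_of_isChain
    (hL : ∀ i j, r i j → cancelLen (g i) (g j) ≤ L j)
    (hR : ∀ i j, r i j → cancelLen (g i) (g j) ≤ R i) {l : ℕ} (hl : 0 < l)
    (hlLR : ∀ i, l + L i + R i ≤ (g i).norm) {i : ι} {I : List ι} (hI : (i :: I).IsChain r) :
    l * (i :: I).length + L i ≤ ((i :: I).map g).prod.norm := by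
  induction I generalizing i with
  | nil =>
    have := hlLR i
    simp only [List.length_singleton, List.map_singleton, List.prod_singleton]
    omega
  | cons j I ih =>
    obtain ⟨hij, hjI⟩ := List.isChain_cons_cons.1 hI
    have hcancel : cancelLen (g i) ((j :: I).map g).prod = cancelLen (g i) (g j) :=
      cancelLen_mul_prod_of_isChain hL hR (fun k => by have := hlLR k; omega) hjI (hL i j hij)
    have hnorm := norm_mul_add_two_mul_cancelLen (g i) ((j :: I).map g).prod
    have := ih hjI
    have := hlLR i
    have := hL i j hij
    have := hR i j hij
    rw [List.map_cons, List.prod_cons, List.length_cons, mul_add_one]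
    omega

end Chain

end Cancellation

section Remnant

variable {β : Type} [DecidableEq β] {N : ℕ}

theorem inv_pmPow (b : Bool) (x : FreeGroup β) : (pmPow b x)⁻¹ = pmPow (!b) x := by
  cases b <;> simp [pmPow]

theorem norm_pmPow (b : Bool) (x : FreeGroup β) : (pmPow b x).norm = x.norm := by
  cases b <;> simp [pmPow]

theorem lift_eq_prod_pmPow {α : Type*} [DecidableEq α] (t : α → FreeGroup β) (z : FreeGroup α) :
    lift t z = (z.toWord.map fun p => pmPow p.2 (t p.1)).prod := by
  conv_lhs => rw [← mk_toWord (x := z), lift_mk]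
  simp only [pmPow, Bool.cond_eq_ite]

theorem cancelLen_le_leftCancel (t : Fin N → FreeGroup β) {i : Fin N} {p : Fin N × Bool}
    (hp : ¬(p.1 = i ∧ p.2 = false)) :
    cancelLen (pmPow p.2 (t p.1)) (t i) ≤ leftCancel t i := by
  simpa only [leftCancel, if_neg hp] using Finset.le_sup (f := fun p : Fin N × Bool =>
    if p.1 = i ∧ p.2 = false then 0 else cancelLen (pmPow p.2 (t p.1)) (t i)) (Finset.mem_univ p)

theorem cancelLen_le_rightCancel (t : Fin N → FreeGroup β) {i : Fin N} {p : Fin N × Bool}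
    (hp : ¬(p.1 = i ∧ p.2 = false)) :
    cancelLen (t i) (pmPow p.2 (t p.1)) ≤ rightCancel t i := by
  simpa only [rightCancel, if_neg hp] using Finset.le_sup (f := fun p : Fin N × Bool =>
    if p.1 = i ∧ p.2 = false then 0 else cancelLen (t i) (pmPow p.2 (t p.1))) (Finset.mem_univ p)

/-- The left cancellation of the signed entry `h_i^{±1}`, where `p = (i, ±)` is a letter as in
`FreeGroup.toWord`; inverting an entry exchanges its two sides. -/
def signedLeftCancel (t : Fin N → FreeGroup β) (p : Fin N × Bool) : ℕ :=
  if p.2 then leftCancel t p.1 else rightCancel t p.1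

/-- The right cancellation of the signed entry `h_i^{±1}`, with the conventions of
`signedLeftCancel`. -/
def signedRightCancel (t : Fin N → FreeGroup β) (p : Fin N × Bool) : ℕ :=
  if p.2 then rightCancel t p.1 else leftCancel t p.1

theorem cancelLen_le_signedLeftCancel (t : Fin N → FreeGroup β) {p q : Fin N × Bool}
    (hpq : p.1 = q.1 → p.2 = q.2) :
    cancelLen (pmPow p.2 (t p.1)) (pmPow q.2 (t q.1)) ≤ signedLeftCancel t q := by
  obtain ⟨j, _ | _⟩ := q
  · rw [← cancelLen_inv_inv, inv_pmPow, inv_pmPow]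
    exact cancelLen_le_rightCancel t (p := (p.1, !p.2)) (by simpa using hpq)
  · exact cancelLen_le_leftCancel t (by simpa using hpq)

theorem cancelLen_le_signedRightCancel (t : Fin N → FreeGroup β) {p q : Fin N × Bool}
    (hpq : p.1 = q.1 → p.2 = q.2) :
    cancelLen (pmPow p.2 (t p.1)) (pmPow q.2 (t q.1)) ≤ signedRightCancel t p := by
  have h := cancelLen_le_signedLeftCancel t (p := (q.1, !q.2)) (q := (p.1, !p.2))
    fun h => congrArg not (hpq h.symm).symm
  rw [← inv_pmPow, ← inv_pmPow, cancelLen_inv_inv] at h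
  rcases p with ⟨i, _ | _⟩ <;> exact h

theorem add_signedLeftCancel_add_signedRightCancel_le {t : Fin N → FreeGroup β} {l : ℕ}
    (hl : 0 < l) (p : Fin N × Bool) (hp : l ≤ remLen t p.1) :
    l + signedLeftCancel t p + signedRightCancel t p ≤ (pmPow p.2 (t p.1)).norm := by
  unfold remLen at hp
  rw [norm_pmPow, signedLeftCancel, signedRightCancel]
  split_ifs <;> omega

theorem mul_norm_le_norm_lift {t : Fin N → FreeGroup β} {l : ℕ} (hl : ∀ i, l ≤ remLen t i)
    (z : FreeGroup (Fin N)) : l * z.norm ≤ (lift t z).norm := by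
  obtain rfl | hl₀ := l.eq_zero_or_pos
  · simp
  have hz : IsReduced z.toWord := isReduced_toWord
  rw [lift_eq_prod_pmPow, FreeGroup.norm]
  cases hw : z.toWord with
  | nil => simp
  | cons p w =>
    rw [hw] at hz
    have hprod := mul_length_add_le_norm_prod_of_isChain (g := fun q => pmPow q.2 (t q.1))
      (fun _ _ => cancelLen_le_signedLeftCancel t) (fun _ _ => cancelLen_le_signedRightCancel t)
      hl₀ (fun q => add_signedLeftCancel_add_signedRightCancel_le hl₀ q (hl q.1)) hz
    exact (Nat.le_add_right _ _).trans hprod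

end Remnant

/-- Let `φ : G → H` be a homomorphism of free groups with remnant, and
set `l = min_i |Rem_φ a_i| ≥ 1`. Then `w ∈ φ(G)` if and only if there is `z` with
`|z| ≤ |w| / l` and `w = φ(z)`; so membership in the image subgroup `φ(G)` is decided
by finitely many checks. -/
theorem image_membership_decision {n : ℕ} {β : Type} [DecidableEq β] (hn : 0 < n)
    (φ : FreeGroup (Fin n) →* FreeGroup β)
    (hrem : HasRemnant fun i : Fin n => φ (FreeGroup.of i))
    (l : ℕ)
    (hl : l = Finset.univ.inf'
      (⟨⟨0, hn⟩, Finset.mem_univ _⟩ : (Finset.univ : Finset (Fin n)).Nonempty)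
      (fun i => remLen (fun j : Fin n => φ (FreeGroup.of j)) i))
    (w : FreeGroup β) :
    w ∈ φ.range ↔
      ∃ z : FreeGroup (Fin n),
        (FreeGroup.norm z : ℝ) ≤ (FreeGroup.norm w : ℝ) / l ∧ w = φ z := by
  constructor
  · rintro ⟨z, rfl⟩
    have hl_pos : 0 < l := hl ▸ (Finset.lt_inf'_iff _).2 fun i _ => hrem i
    have hl_le : ∀ i, l ≤ remLen (fun j => φ (of j)) i :=
      fun i => hl ▸ Finset.inf'_le _ (Finset.mem_univ i)
    have hbound : l * z.norm ≤ (φ z).norm := by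
      rw [lift_unique φ (f := fun j => φ (of j)) fun _ => rfl]
      exact mul_norm_le_norm_lift hl_le z
    refine ⟨z, (le_div_iff₀' (Nat.cast_pos.2 hl_pos)).2 ?_, rfl⟩
    exact_mod_cast hbound
  · rintro ⟨z, -, rfl⟩
    exact ⟨z, rfl⟩
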